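/- Every standard graded Artinian Gorenstein ℂ-algebra A = ⊕_{i=0}^d A_i with dim_ℂ A_1 ≤ 4 and socle degree d ∈ {3, 4} has the Strong Lefschetz Property. -/

import Mathlib

open Module

/-!
Let `L` be general among the degree one elements with `L ^ d ≠ 0`: its power `L ^ (d - 2)` has a
kernel on `A_1` of least dimension. By Poincaré duality, the strong Lefschetz property for `d ≤ 4`
reduces to the vanishing of that kernel. Cramer's rule extends any `x` in the kernel to a polynomial
curve `p(t) = x + t y + t² z + ⋯` in `A_1` such that `p(t)` lies in the kernel of `(L + t M)^(d-2)`
for almost all `t`. Since the elements `L + t M` are again general, every identity proved for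
general elements holds along the curve, and comparing its coefficients gives new relations in `A`.

If `M ^ 2 * x ≠ 0` for some `M` in socle degree three, these relations exhibit five vectors
`M, L, z, y, x` in `A_1` on which suitable multiplications act as a triangular matrix, contradicting
`dim A_1 ≤ 4`. In socle degree four the same device shows first `x ^ 2 = 0` and then `L * x = 0`
for all `x` in the kernel; the latter, applied along the curve, gives `M * x = 0` for all `M`.
-/

section CoefficientwiseFunctionals

open Polynomial Filter

variable {K A : Type*} [Field K] [CommRing A] [Algebra K A]

/-- Coefficientwise application of a linear functional to a polynomial over `A`. -/
noncomputable def coeffMap (g : Dual K A) : A[X] →ₗ[K] K[X] :=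
  lsum fun n => monomial n ∘ₗ g

lemma coeff_coeffMap (g : Dual K A) (q : A[X]) (n : ℕ) :
    (coeffMap g q).coeff n = g (q.coeff n) := by
  suffices (coeffMap g q).coeff n = if n ∈ q.support then g (q.coeff n) else 0 by
    rw [this, ite_eq_left_iff]
    exact fun h => by rw [notMem_support_iff.1 h, map_zero]
  simp [coeffMap, lsum, sum_def, coeff_monomial]

lemma coeffMap_map_mul (g : Dual K A) (c : K[X]) (q : A[X]) :
    coeffMap g (c.map (algebraMap K A) * q) = c * coeffMap g q := by
  ext n
  simp [coeff_coeffMap, coeff_mul, ← Algebra.smul_def]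

lemma eval_coeffMap (g : Dual K A) (q : A[X]) (t : K) :
    (coeffMap g q).eval t = g (q.eval (algebraMap K A t)) := by
  induction q using Polynomial.induction_on' with
  | add p q hp hq => simp [hp, hq]
  | monomial n a =>
    simp [coeffMap, lsum, ← map_pow, mul_comm a, ← Algebra.smul_def, mul_comm (g a)]

lemma eventually_eval_ne_zero_of_ne_zero {b : K[X]} (hb : b ≠ 0) :
    ∀ᶠ t in cofinite, b.eval t ≠ 0 := by
  simpa [eventually_cofinite] using! finite_setOfPred_isRoot hb

lemma eventually_eval_algebraMap_ne_zero {q : A[X]} (hq : q ≠ 0) :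
    ∀ᶠ t : K in cofinite, q.eval (algebraMap K A t) ≠ 0 := by
  obtain ⟨n, hn⟩ := ext_iff.not.1 hq |> not_forall.1
  obtain ⟨g, hg⟩ := Projective.exists_dual_ne_zero K hn
  have hgq : coeffMap g q ≠ 0 := fun h => hg (by simp [← coeff_coeffMap, h])
  filter_upwards [eventually_eval_ne_zero_of_ne_zero hgq] with t ht h
  exact ht (by rw [eval_coeffMap, h, map_zero])

lemma eq_zero_of_eventually_eval_eq_zero [Infinite K] {q : A[X]}
    (h : ∀ᶠ t : K in cofinite, q.eval (algebraMap K A t) = 0) : q = 0 := by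
  by_contra hq
  obtain ⟨t, ht, ht'⟩ := (h.and (eventually_eval_algebraMap_ne_zero hq)).exists
  exact ht' ht

end CoefficientwiseFunctionals

section CramerSections

open Polynomial

variable {K A : Type*} [Field K] [CommRing A] [Algebra K A]
  {ι : Type*} [Fintype ι] [DecidableEq ι]

/-- The matrix with entries `g j (F(t) * w i)`, whose determinant is the minor certifying that
multiplication by `F(t)` has rank at least `#ι` on the span of `w`. -/
noncomputable def pairingMatrix (g : ι → Dual K A) (F : A[X]) (w : ι → A) : Matrix ι ι K[X] :=
  Matrix.of fun j i => coeffMap (g j) (F * C (w i))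

/-- The combination of `x` and the `w i` over `K[t]` that Cramer's rule produces so that every
`g j` vanishes on its product with `F`. Scaling `x` by the determinant avoids denominators. -/
noncomputable def cramerSection (g : ι → Dual K A) (F : A[X]) (w : ι → A) (x : A) : A[X] :=
  (pairingMatrix g F w).det.map (algebraMap K A) * C x -
    ∑ i, ((pairingMatrix g F w).cramer (fun j => coeffMap (g j) (F * C x)) i).map (algebraMap K A)
      * C (w i)

lemma coeffMap_mul_cramerSection (g : ι → Dual K A) (F : A[X]) (w : ι → A) (x : A) (j : ι) :
    coeffMap (g j) (F * cramerSection g F w x) = 0 := by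
  have h := congrFun ((pairingMatrix g F w).mulVec_cramer fun j => coeffMap (g j) (F * C x)) j
  simp only [Matrix.mulVec, dotProduct, pairingMatrix, Matrix.of_apply, Pi.smul_apply,
    smul_eq_mul] at h
  simp only [cramerSection, mul_sub, Finset.mul_sum, mul_left_comm F, map_sub, map_sum,
    coeffMap_map_mul, pairingMatrix]
  rw [sub_eq_zero, ← h]
  exact Finset.sum_congr rfl fun i _ => mul_comm _ _

lemma coeff_cramerSection_mem (g : ι → Dual K A) (F : A[X]) {w : ι → A} {x : A}
    {V : Submodule K A} (hw : ∀ i, w i ∈ V) (hx : x ∈ V) (n : ℕ) :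
    (cramerSection g F w x).coeff n ∈ V := by
  simp only [cramerSection, coeff_sub, finsetSum_coeff, coeff_mul_C, coeff_map, ← Algebra.smul_def]
  exact V.sub_mem (V.smul_mem _ hx) (V.sum_mem fun i _ => V.smul_mem _ (hw i))

variable {g : ι → Dual K A} {F : A[X]} {w : ι → A}

lemma eval_zero_det_pairingMatrix (h : ∀ j i, g j (F.coeff 0 * w i) = (1 : Matrix ι ι K) j i) :
    (pairingMatrix g F w).det.eval 0 = 1 := by
  have hone : (evalRingHom (0 : K)).mapMatrix (pairingMatrix g F w) = 1 := by
    ext j i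
    simp [pairingMatrix, eval_coeffMap, ← coeff_zero_eq_eval_zero, h]
  rw [← coe_evalRingHom, RingHom.map_det, hone, Matrix.det_one]

lemma coeff_zero_cramerSection (h : ∀ j i, g j (F.coeff 0 * w i) = (1 : Matrix ι ι K) j i)
    {x : A} (hx : F.coeff 0 * x = 0) : (cramerSection g F w x).coeff 0 = x := by
  have hv : ∀ j, (coeffMap (g j) (F * C x)).eval 0 = 0 := fun j => by
    simp [eval_coeffMap, ← coeff_zero_eq_eval_zero, hx]
  have hcramer : ∀ i, ((pairingMatrix g F w).cramer
      (fun j => coeffMap (g j) (F * C x)) i).coeff 0 = 0 := fun i => by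
    simp [Matrix.cramer_eq_adjugate_mulVec, Matrix.mulVec, dotProduct, coeff_zero_eq_eval_zero,
      eval_finsetSum, hv]
  simp [cramerSection, hcramer, coeff_zero_eq_eval_zero (Matrix.det _),
    eval_zero_det_pairingMatrix h]

lemma eq_zero_of_pairing_eq_zero {t : K} (ht : (pairingMatrix g F w).det.eval t ≠ 0) {c : ι → K}
    (hc : ∀ j, g j (F.eval (algebraMap K A t) * ∑ i, c i • w i) = 0) : c = 0 := by
  rw [← coe_evalRingHom, RingHom.map_det] at ht
  refine Matrix.eq_zero_of_mulVec_eq_zero ht (funext fun j => ?_)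
  simpa [Matrix.mulVec, dotProduct, pairingMatrix, eval_coeffMap, Finset.mul_sum, mul_comm (c _)]
    using hc j

end CramerSections

section KernelDimension

variable {K : Type*} [Field K]

lemma finrank_map_add_finrank_inf_ker {M N : Type*} [AddCommGroup M] [Module K M] [AddCommGroup N]
    [Module K N] (f : M →ₗ[K] N) (V : Submodule K M) [Module.Finite K V] :
    finrank K (V.map f) + finrank K (V ⊓ LinearMap.ker f : Submodule K M) = finrank K V := by
  rw [← (f.domRestrict V).finrank_range_add_finrank_ker, LinearMap.range_domRestrict,
    LinearMap.ker_domRestrict, ← Submodule.finrank_map_subtype_eq, Submodule.map_comap_subtype]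

lemma exists_dual_frame {M N : Type*} [AddCommGroup M] [Module K M] [AddCommGroup N] [Module K N]
    (f : M →ₗ[K] N) (V : Submodule K M) [Module.Finite K V] :
    ∃ (w : Fin (finrank K (V.map f)) → M) (g : Fin (finrank K (V.map f)) → Dual K N),
      (∀ i, w i ∈ V) ∧ ∀ j i, g j (f (w i)) = (1 : Matrix _ _ K) j i := by
  let b := finBasis K (V.map f)
  choose w hwV hw using fun i => (b i).2
  choose g hg using fun j => (b.coord j).exists_extend
  refine ⟨w, g, hwV, fun j i => ?_⟩
  have hgb : g j (b i) = b.coord j (b i) := LinearMap.congr_fun (hg j) (b i)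
  rw [hw, hgb, Basis.coord_apply, b.repr_self, Finsupp.single_apply, Matrix.one_apply]
  simp only [eq_comm]

lemma finrank_inf_ker_add_card_le {M : Type*} [AddCommGroup M] [Module K M] {V : Submodule K M}
    [Module.Finite K V] {ι : Type*} [Fintype ι] (G : M →ₗ[K] ι → K) {w : ι → M}
    (hw : ∀ i, w i ∈ V) (hG : ∀ c : ι → K, G (∑ i, c i • w i) = 0 → c = 0) :
    finrank K (V ⊓ LinearMap.ker G : Submodule K M) + Fintype.card ι ≤ finrank K V := by
  have hli : LinearIndependent K fun i => (⟨G (w i), w i, hw i, rfl⟩ : V.map G) :=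
    Fintype.linearIndependent_iff.2 fun c hc => congrFun <| hG c <| by
      simpa using congrArg Subtype.val hc
  have hcard := hli.fintype_card_le_finrank
  have hrank := finrank_map_add_finrank_inf_ker G V
  omega

end KernelDimension

section KernelCurves

open Polynomial Filter

variable {K A : Type*} [Field K] [CommRing A] [Algebra K A]

/-- The kernel of multiplication by `a` on the subspace `V`, as a subspace of `A`. -/
def mulKer (V : Submodule K A) (a : A) : Submodule K A :=
  V ⊓ LinearMap.ker (LinearMap.mulLeft K a)

lemma mem_mulKer {V : Submodule K A} {a x : A} : x ∈ mulKer V a ↔ x ∈ V ∧ a * x = 0 := by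
  simp [mulKer]

lemma finrank_map_mulLeft_add_finrank_mulKer (V : Submodule K A) [Module.Finite K V] (a : A) :
    finrank K (V.map (LinearMap.mulLeft K a)) + finrank K (mulKer V a) = finrank K V :=
  finrank_map_add_finrank_inf_ker _ V

theorem exists_kernel_section {V : Submodule K A} [Module.Finite K V] {F : A[X]} {x : A}
    (hx : x ∈ mulKer V (F.coeff 0)) :
    ∃ p : A[X], (∀ n, p.coeff n ∈ V) ∧ p.coeff 0 = x ∧ ∀ᶠ t : K in cofinite,
      finrank K (mulKer V (F.eval (algebraMap K A t))) ≤ finrank K (mulKer V (F.coeff 0)) ∧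
      (finrank K (mulKer V (F.coeff 0)) ≤ finrank K (mulKer V (F.eval (algebraMap K A t))) →
        p.eval (algebraMap K A t) ∈ mulKer V (F.eval (algebraMap K A t))) := by
  obtain ⟨hxV, hFx⟩ := mem_mulKer.1 hx
  obtain ⟨w, g, hw, hgw⟩ := exists_dual_frame (LinearMap.mulLeft K (F.coeff 0)) V
  have hdet := eval_zero_det_pairingMatrix hgw
  refine ⟨cramerSection g F w x, coeff_cramerSection_mem g F hw hxV,
    coeff_zero_cramerSection hgw hFx, ?_⟩
  have hdet_ne : (pairingMatrix g F w).det ≠ 0 := fun h => by simp [h] at hdet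
  filter_upwards [eventually_eval_ne_zero_of_ne_zero hdet_ne] with t ht
  set a := F.eval (algebraMap K A t)
  let G : A →ₗ[K] _ → K := LinearMap.pi g ∘ₗ LinearMap.mulLeft K a
  have hrank := finrank_inf_ker_add_card_le G hw fun c hc =>
    eq_zero_of_pairing_eq_zero ht fun j => congrFun hc j
  have hrank₀ := finrank_map_mulLeft_add_finrank_mulKer V (F.coeff 0)
  have hle : mulKer V a ≤ V ⊓ LinearMap.ker G :=
    inf_le_inf_left V (LinearMap.ker_le_ker_comp _ _)
  have : Module.Finite K (V ⊓ LinearMap.ker G : Submodule K A) :=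
    Submodule.finiteDimensional_inf_left _ _
  have hmono := Submodule.finrank_mono hle
  rw [Fintype.card_fin] at hrank
  refine ⟨by omega, fun hmin => ?_⟩
  rw [Submodule.eq_of_le_of_finrank_le hle (by omega)]
  refine ⟨?_, funext fun j => ?_⟩
  · rw [eval_eq_sum, Polynomial.sum]
    refine V.sum_mem fun n _ => ?_
    rw [← map_pow, mul_comm, ← Algebra.smul_def]
    exact V.smul_mem _ (coeff_cramerSection_mem g F hw hxV n)
  · simpa [a, G, eval_coeffMap] using congrArg (eval t) (coeffMap_mul_cramerSection g F w x j)

/-- `L` is general in `V` for the exponent `m`: its power `L ^ m` has a kernel on `V` of least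
dimension among the elements whose power of exponent `m + 2`, the socle degree, is nonzero. -/
structure IsGeneral (V : Submodule K A) (m : ℕ) (L : A) : Prop where
  mem : L ∈ V
  pow_ne_zero : L ^ (m + 2) ≠ 0
  finrank_le : ∀ L' ∈ V, L' ^ (m + 2) ≠ 0 →
    finrank K (mulKer V (L ^ m)) ≤ finrank K (mulKer V (L' ^ m))

lemma exists_isGeneral {V : Submodule K A} {m : ℕ} (h : ∃ L ∈ V, L ^ (m + 2) ≠ 0) :
    ∃ L, IsGeneral V m L := by
  obtain ⟨L, ⟨hL, hpow⟩, hmin⟩ := exists_minimalFor_of_wellFoundedLT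
    (fun L => L ∈ V ∧ L ^ (m + 2) ≠ 0) (fun L => finrank K (mulKer V (L ^ m))) h
  exact ⟨L, hL, hpow, fun L' hL' hpow' => (le_total _ _).elim id (hmin ⟨hL', hpow'⟩)⟩

/-- The pencil `L + t M` as a polynomial in `t`. -/
noncomputable def pencil (L M : A) : A[X] := C L + X * C M

lemma eval_pencil (L M : A) (s : A) : (pencil L M).eval s = L + s * M := by
  simp [pencil, mul_comm M]

lemma coeff_pencil_mul_zero (L M : A) (q : A[X]) :
    (pencil L M * q).coeff 0 = L * q.coeff 0 := by
  simp [pencil, add_mul, mul_assoc]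

lemma coeff_pencil_mul_succ (L M : A) (q : A[X]) (n : ℕ) :
    (pencil L M * q).coeff (n + 1) = L * q.coeff (n + 1) + M * q.coeff n := by
  simp [pencil, add_mul, mul_assoc, coeff_X_mul]

lemma coeff_zero_pencil_pow_mul (L M : A) (n : ℕ) (q : A[X]) :
    (pencil L M ^ n * q).coeff 0 = L ^ n * q.coeff 0 := by
  simp [coeff_zero_eq_eval_zero, eval_pencil]

lemma coeff_one_pencil_pow_mul (L M : A) (n : ℕ) (q : A[X]) :
    (pencil L M ^ (n + 1) * q).coeff 1 =
      L ^ (n + 1) * q.coeff 1 + (n + 1) • (L ^ n * M * q.coeff 0) := by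
  induction n generalizing q with
  | zero => simp [coeff_pencil_mul_succ]
  | succ n ih =>
    rw [pow_succ, mul_assoc, ih, coeff_pencil_mul_succ, coeff_pencil_mul_zero]
    simp only [nsmul_eq_mul]
    push_cast
    ring

/-- A polynomial curve `p` in `V` such that, for all but finitely many `t`, the element `L + t M` is
general and `p(t)` lies in the kernel of its `m`-th power. -/
structure IsKernelCurve (V : Submodule K A) (m : ℕ) (L M : A) (p : A[X]) : Prop where
  coeff_mem : ∀ n, p.coeff n ∈ V
  eventually : ∀ᶠ t : K in cofinite,
    IsGeneral V m ((pencil L M).eval (algebraMap K A t)) ∧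
      p.eval (algebraMap K A t) ∈ mulKer V ((pencil L M).eval (algebraMap K A t) ^ m)

variable {V : Submodule K A} {m : ℕ} {L M x : A}

theorem IsGeneral.exists_kernelCurve [Module.Finite K V] (hL : IsGeneral V m L) (hM : M ∈ V)
    (hx : x ∈ mulKer V (L ^ m)) : ∃ p, IsKernelCurve V m L M p ∧ p.coeff 0 = x := by
  have hcoeff (n : ℕ) : (pencil L M ^ n).coeff 0 = L ^ n := by
    simpa using coeff_zero_pencil_pow_mul L M n 1
  have hpow : pencil L M ^ (m + 2) ≠ 0 := fun h => hL.pow_ne_zero (by rw [← hcoeff, h, coeff_zero])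
  obtain ⟨p, hpV, hp0, hp⟩ := exists_kernel_section (F := pencil L M ^ m) (hcoeff m ▸ hx)
  refine ⟨p, ⟨hpV, ?_⟩, hp0⟩
  filter_upwards [hp, eventually_eval_algebraMap_ne_zero hpow] with t ht hne
  rw [eval_pow] at ht hne
  rw [hcoeff] at ht
  have hmem : (pencil L M).eval (algebraMap K A t) ∈ V := by
    rw [eval_pencil, ← Algebra.smul_def]
    exact V.add_mem hL.mem (V.smul_mem t hM)
  exact ⟨⟨hmem, hne, fun L' hL' h => ht.1.trans (hL.finrank_le L' hL' h)⟩,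
    ht.2 (hL.finrank_le _ hmem hne)⟩

namespace IsKernelCurve

variable [Infinite K] {p : A[X]}

lemma eq_zero_of_general (hp : IsKernelCurve V m L M p) {E : A[X]}
    (hE : ∀ t : K, IsGeneral V m ((pencil L M).eval (algebraMap K A t)) →
      p.eval (algebraMap K A t) ∈ mulKer V ((pencil L M).eval (algebraMap K A t) ^ m) →
      E.eval (algebraMap K A t) = 0) : E = 0 :=
  eq_zero_of_eventually_eval_eq_zero <| hp.eventually.mono fun t ht => hE t ht.1 ht.2

lemma pencil_pow_mul_eq_zero (hp : IsKernelCurve V m L M p) : pencil L M ^ m * p = 0 :=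
  hp.eq_zero_of_general fun _ _ ht => by simpa using (mem_mulKer.1 ht).2

end IsKernelCurve

end KernelCurves

section Relations

open Polynomial

variable {A : Type*} [CommRing A] {L M : A} {p : A[X]}

lemma coeff_of_pencil_mul_eq_zero (h : pencil L M * p = 0) (n : ℕ) :
    L * p.coeff (n + 1) + M * p.coeff n = 0 := by
  rw [← coeff_pencil_mul_succ, h, coeff_zero]

lemma coeff_one_of_pencil_sq_mul_eq_zero (h : pencil L M ^ 2 * p = 0) :
    L ^ 2 * p.coeff 1 + 2 * L * M * p.coeff 0 = 0 := by
  have h₁ := coeff_one_pencil_pow_mul L M 1 p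
  rw [one_add_one_eq_two, h, coeff_zero, nsmul_eq_mul] at h₁
  linear_combination -h₁

lemma coeff_one_mul_self (q : A[X]) : (q * q).coeff 1 = 2 * (q.coeff 0 * q.coeff 1) := by
  rw [mul_coeff_one]
  ring

lemma coeff_of_pencil_sq_mul_eq_zero (h : pencil L M ^ 2 * p = 0) (n : ℕ) :
    L ^ 2 * p.coeff (n + 2) + 2 * L * M * p.coeff (n + 1) + M ^ 2 * p.coeff n = 0 := by
  rw [pow_two, mul_assoc] at h
  have hn := coeff_of_pencil_mul_eq_zero h (n + 1)
  rw [coeff_pencil_mul_succ, coeff_pencil_mul_succ] at hn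
  linear_combination hn

variable [IsAddTorsionFree A]

lemma eq_zero_of_nsmul_eq_zero {n : ℕ} [NeZero n] {u : A} (h : n • u = 0) : u = 0 :=
  (nsmul_eq_zero_iff_right (NeZero.ne n)).1 h

lemma coeff_zero_mul_coeff_one_eq_zero (h : p * p = 0) : p.coeff 0 * p.coeff 1 = 0 := by
  refine eq_zero_of_nsmul_eq_zero (n := 2) ?_
  rw [nsmul_eq_mul, Nat.cast_ofNat, ← coeff_one_mul_self, h, coeff_zero]

lemma products_of_pencil_mul_eq_zero (h : pencil L M * p = 0) (hsq : p * p = 0) :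
    M * p.coeff 1 * p.coeff 1 = 0 ∧ M * p.coeff 0 * p.coeff 2 = 0 ∧
      M * p.coeff 1 * p.coeff 2 = 0 := by
  have l₁ : L * p.coeff 1 + M * p.coeff 0 = 0 := coeff_of_pencil_mul_eq_zero h 0
  have l₂ : L * p.coeff 2 + M * p.coeff 1 = 0 := coeff_of_pencil_mul_eq_zero h 1
  have l₃ : L * p.coeff 3 + M * p.coeff 2 = 0 := coeff_of_pencil_mul_eq_zero h 2
  have s₂ : p.coeff 0 * p.coeff 2 + (p.coeff 1 * p.coeff 1 + p.coeff 2 * p.coeff 0) = 0 := by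
    simpa [coeff_mul, Finset.Nat.antidiagonal_succ] using congrArg (coeff · 2) hsq
  have s₃ : p.coeff 0 * p.coeff 3 + (p.coeff 1 * p.coeff 2 +
      (p.coeff 2 * p.coeff 1 + p.coeff 3 * p.coeff 0)) = 0 := by
    simpa [coeff_mul, Finset.Nat.antidiagonal_succ] using congrArg (coeff · 3) hsq
  have h₁₁ : M * p.coeff 1 * p.coeff 1 = 0 := eq_zero_of_nsmul_eq_zero (n := 3) <| by
    linear_combination M * s₂ - 2 * p.coeff 2 * l₁ + 2 * p.coeff 1 * l₂
  refine ⟨h₁₁, eq_zero_of_nsmul_eq_zero (n := 2) ?_, eq_zero_of_nsmul_eq_zero (n := 4) ?_⟩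
  · linear_combination M * s₂ - h₁₁
  · linear_combination M * s₃ + 2 * p.coeff 1 * l₃ - 2 * p.coeff 3 * l₁

lemma products_of_pencil_sq_mul_eq_zero (h : pencil L M ^ 2 * p = 0) (hsq : p * p = 0)
    (h₀ : L ^ 2 * p.coeff 0 = 0) :
    L * M * p.coeff 0 * p.coeff 2 = 0 ∧ p.coeff 0 * p.coeff 2 * p.coeff 3 = 0 ∧
      2 * L * M * p.coeff 0 * p.coeff 3 + M ^ 2 * p.coeff 0 * p.coeff 2 = 0 := by
  have l₃ : L ^ 2 * p.coeff 3 + 2 * L * M * p.coeff 2 + M ^ 2 * p.coeff 1 = 0 :=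
    coeff_of_pencil_sq_mul_eq_zero h 1
  have l₄ : L ^ 2 * p.coeff 4 + 2 * L * M * p.coeff 3 + M ^ 2 * p.coeff 2 = 0 :=
    coeff_of_pencil_sq_mul_eq_zero h 2
  have h₀₁ : p.coeff 0 * p.coeff 1 = 0 := coeff_zero_mul_coeff_one_eq_zero hsq
  have s₀ : p.coeff 0 * p.coeff 0 = 0 := by rw [← mul_coeff_zero, hsq, coeff_zero]
  have s₅ : p.coeff 0 * p.coeff 5 + (p.coeff 1 * p.coeff 4 + (p.coeff 2 * p.coeff 3 +
      (p.coeff 3 * p.coeff 2 + (p.coeff 4 * p.coeff 1 + p.coeff 5 * p.coeff 0)))) = 0 := by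
    simpa [coeff_mul, Finset.Nat.antidiagonal_succ] using congrArg (coeff · 5) hsq
  refine ⟨eq_zero_of_nsmul_eq_zero (n := 2) ?_, eq_zero_of_nsmul_eq_zero (n := 2) ?_, ?_⟩
  · linear_combination p.coeff 0 * l₃ - p.coeff 3 * h₀ - M ^ 2 * h₀₁
  · linear_combination
      p.coeff 0 * s₅ - 2 * p.coeff 4 * h₀₁ - 2 * p.coeff 5 * s₀
  · linear_combination p.coeff 0 * l₄ - p.coeff 4 * h₀

end Relations

section Triangular

variable {K A : Type*} [Field K] [CommRing A] [Algebra K A]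

lemma linearIndependent_of_mul_triangular {ι : Type*} [Finite ι] [LinearOrder ι] {v w : ι → A}
    (hdiag : ∀ i, w i * v i ≠ 0) (hupper : ∀ i j, i < j → w i * v j = 0) :
    LinearIndependent K v := by
  cases nonempty_fintype ι
  refine Fintype.linearIndependent_iff.2 fun c hc i => ?_
  induction i using WellFoundedLT.induction with
  | ind i ih =>
  have hi : ∑ j, c j • (w i * v j) = 0 := by
    simpa [Finset.mul_sum] using congrArg (w i * ·) hc
  rw [Finset.sum_eq_single i] at hi
  · exact (smul_eq_zero.1 hi).resolve_right (hdiag i)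
  · intro j _ hji
    rcases hji.lt_or_gt with h | h
    · rw [ih j h, zero_smul]
    · rw [hupper i j h, smul_zero]
  · simp

lemma card_le_finrank_of_mul_triangular {V : Submodule K A} [Module.Finite K V] {ι : Type*}
    [Fintype ι] [LinearOrder ι] {v w : ι → A} (hv : ∀ i, v i ∈ V) (hdiag : ∀ i, w i * v i ≠ 0)
    (hupper : ∀ i j, i < j → w i * v j = 0) : Fintype.card ι ≤ finrank K V := by
  rw [← finrank_span_eq_card (linearIndependent_of_mul_triangular (K := K) hdiag hupper)]
  exact Submodule.finrank_mono (Submodule.span_le.2 (Set.range_subset_iff.2 hv))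

end Triangular

section Detected

open Polynomial

variable {K A : Type*} [Field K] [CommRing A] [Algebra K A]

/-- Every nonzero element of degree `j = d - i` is detected by multiplication by some `i`-th power
of an element of degree one: the form in which Poincaré duality enters the argument. -/
def DetectedByPowers (𝒜 : ℕ → Submodule K A) (d : ℕ) : Prop :=
  ∀ i j, i + j = d → ∀ e ∈ 𝒜 j, (∀ N ∈ 𝒜 1, N ^ i * e = 0) → e = 0

lemma pow_mem_degree (𝒜 : ℕ → Submodule K A) [GradedAlgebra 𝒜] {L : A} (hL : L ∈ 𝒜 1) (n : ℕ) :
    L ^ n ∈ 𝒜 n := by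
  simpa using SetLike.pow_mem_graded n hL

variable [CharZero K]

lemma mul_eq_zero_of_mem_pow {V : Submodule K A} {k : ℕ} {e : A} (he : ∀ L ∈ V, L ^ k * e = 0) :
    ∀ w ∈ V ^ k, w * e = 0 := by
  have : IsAddTorsionFree A := .of_isTorsionFree K A
  induction k generalizing e with
  | zero => intro w _; rw [← one_mul e, ← pow_zero 0, he 0 V.zero_mem, mul_zero]
  | succ k ih =>
    have hmixed {L M : A} (hL : L ∈ V) (hM : M ∈ V) : L ^ k * (M * e) = 0 := by
      have hpencil : pencil L M ^ (k + 1) * C e = 0 :=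
        eq_zero_of_eventually_eval_eq_zero (K := K) <| .of_forall fun t => by
          rw [eval_mul, eval_pow, eval_pencil, eval_C, ← Algebra.smul_def]
          exact he _ (V.add_mem hL (V.smul_mem t hM))
      have hcoeff := coeff_one_pencil_pow_mul L M k (C e)
      rw [hpencil] at hcoeff
      simp only [coeff_zero, coeff_C_zero, coeff_C_succ, mul_zero, zero_add] at hcoeff
      rw [← mul_assoc]
      exact eq_zero_of_nsmul_eq_zero hcoeff.symm
    intro w hw
    rw [pow_succ] at hw
    induction hw using Submodule.mul_induction_on' with
    | mem_mul_mem a ha b hb => rw [mul_assoc, ih (fun L hL => hmixed hL hb) a ha]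
    | add a _ b _ ha hb => rw [add_mul, ha, hb, add_zero]

lemma detectedByPowers_of_nondegenerate {𝒜 : ℕ → Submodule K A} {d : ℕ}
    (hpow : ∀ k, 𝒜 k = 𝒜 1 ^ k)
    (hgor : ∀ k ≤ d, ∀ a ∈ 𝒜 k, a ≠ 0 → ∃ b ∈ 𝒜 (d - k), a * b ≠ 0) :
    DetectedByPowers 𝒜 d := by
  rintro i j rfl e he h
  by_contra hne
  obtain ⟨b, hb, hbe⟩ := hgor j (by omega) e he hne
  rw [Nat.add_sub_cancel, hpow] at hb
  exact hbe (by rw [mul_comm, mul_eq_zero_of_mem_pow h b hb])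

variable {𝒜 : ℕ → Submodule K A} [GradedAlgebra 𝒜] [Module.Finite K (𝒜 1)] {n : ℕ} {L x : A}

lemma IsGeneral.pow_mul_mul_eq_zero (hdet : DetectedByPowers 𝒜 (n + 3))
    (hL : IsGeneral (𝒜 1) (n + 1) L) (hx : x ∈ mulKer (𝒜 1) (L ^ (n + 1))) {y : A}
    (hy : y ∈ mulKer (𝒜 1) (L ^ (n + 1))) : L ^ n * (x * y) = 0 := by
  have : IsAddTorsionFree A := .of_isTorsionFree K A
  have hmem : L ^ n * (x * y) ∈ 𝒜 (n + 2) := SetLike.mul_mem_graded (pow_mem_degree 𝒜 hL.mem n)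
    (SetLike.mul_mem_graded (mem_mulKer.1 hx).1 (mem_mulKer.1 hy).1)
  refine hdet 1 (n + 2) (by ring) _ hmem fun M hM => ?_
  obtain ⟨p, hp, hp₀⟩ := hL.exists_kernelCurve hM hx
  have h₁ := coeff_one_pencil_pow_mul L M n p
  rw [hp.pencil_pow_mul_eq_zero, hp₀, coeff_zero] at h₁
  refine eq_zero_of_nsmul_eq_zero (n := n + 1) ?_
  simp only [nsmul_eq_mul] at h₁ ⊢
  linear_combination -y * h₁ - p.coeff 1 * (mem_mulKer.1 hy).2

lemma IsKernelCurve.pencil_pow_mul_sq_eq_zero {M : A} {p : A[X]}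
    (hdet : DetectedByPowers 𝒜 (n + 3)) (hp : IsKernelCurve (𝒜 1) (n + 1) L M p) :
    pencil L M ^ n * (p * p) = 0 :=
  hp.eq_zero_of_general fun t hN hpt => by simpa using hN.pow_mul_mul_eq_zero hdet hpt hpt

lemma IsGeneral.pow_mul_cube_eq_zero (hdet : DetectedByPowers 𝒜 (n + 4))
    (hL : IsGeneral (𝒜 1) (n + 2) L) (hx : x ∈ mulKer (𝒜 1) (L ^ (n + 2))) :
    L ^ n * (x * x * x) = 0 := by
  have : IsAddTorsionFree A := .of_isTorsionFree K A
  obtain ⟨p, hp, hp₀⟩ := hL.exists_kernelCurve (mem_mulKer.1 hx).1 hx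
  have hxx : L ^ (n + 1) * (x * x) = 0 := hL.pow_mul_mul_eq_zero hdet hx hx
  have hlin : L ^ (n + 2) * p.coeff 1 = 0 := by
    have h := coeff_one_pencil_pow_mul L x (n + 1) p
    rwa [hp.pencil_pow_mul_eq_zero, hp₀, coeff_zero, mul_assoc, hxx, smul_zero, add_zero,
      eq_comm] at h
  have hsq := coeff_one_pencil_pow_mul L x n (p * p)
  rw [hp.pencil_pow_mul_sq_eq_zero hdet, coeff_zero, coeff_one_mul_self, mul_coeff_zero, hp₀]
    at hsq
  have hy : p.coeff 1 ∈ mulKer (𝒜 1) (L ^ (n + 2)) := mem_mulKer.2 ⟨hp.coeff_mem 1, hlin⟩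
  have hxy : L ^ (n + 1) * (x * p.coeff 1) = 0 := hL.pow_mul_mul_eq_zero hdet hx hy
  refine eq_zero_of_nsmul_eq_zero (n := n + 1) ?_
  simp only [nsmul_eq_mul] at hsq ⊢
  linear_combination -hsq - 2 * hxy

end Detected

section FiveVectors

open Polynomial

variable {K A : Type*} [Field K] [CharZero K] [CommRing A] [Algebra K A] {V : Submodule K A}
  [Module.Finite K V] {L M : A}

lemma five_le_finrank_of_pencil_mul_eq_zero {p : A[X]} (hL : L ∈ V) (hM : M ∈ V)
    (hp : ∀ n, p.coeff n ∈ V) (h : pencil L M * p = 0) (hsq : p * p = 0)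
    (hne : M ^ 2 * p.coeff 0 ≠ 0) : 5 ≤ finrank K V := by
  have : IsAddTorsionFree A := .of_isTorsionFree K A
  have l₀ : L * p.coeff 0 = 0 := by rw [← coeff_pencil_mul_zero L M, h, coeff_zero]
  have l₁ : L * p.coeff 1 + M * p.coeff 0 = 0 := coeff_of_pencil_mul_eq_zero h 0
  have l₂ : L * p.coeff 2 + M * p.coeff 1 = 0 := coeff_of_pencil_mul_eq_zero h 1
  have s₀ : p.coeff 0 * p.coeff 0 = 0 := by rw [← mul_coeff_zero, hsq, coeff_zero]
  have s₁ := coeff_zero_mul_coeff_one_eq_zero hsq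
  obtain ⟨hMyy, hMxz, hMyz⟩ := products_of_pencil_mul_eq_zero h hsq
  have hx₀ : p.coeff 0 ≠ 0 := right_ne_zero_of_mul hne
  obtain ⟨hx, hy, hz⟩ : p.coeff 0 ∈ V ∧ p.coeff 1 ∈ V ∧ p.coeff 2 ∈ V := ⟨hp 0, hp 1, hp 2⟩
  generalize p.coeff 0 = x, p.coeff 1 = y, p.coeff 2 = z at *
  refine card_le_finrank_of_mul_triangular (v := ![M, L, z, y, x])
    (w := ![x * M, y * M, L ^ 2, L * M, 1])
    (by simp [Fin.forall_fin_succ, hL, hM, hx, hy, hz]) ?_ ?_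
  · suffices x * M * M ≠ 0 ∧ y * M * L ≠ 0 ∧ L ^ 2 * z ≠ 0 ∧ L * M * y ≠ 0 ∧ x ≠ 0 by
      simpa [Fin.forall_fin_succ] using this
    refine ⟨?_, ?_, ?_, ?_, hx₀⟩ <;> refine fun h0 => hne ?_
    · linear_combination h0
    · linear_combination M * l₁ - h0
    · linear_combination h0 + M * l₁ - L * l₂
    · linear_combination M * l₁ - h0
  · suffices (x * M * L = 0 ∧ x * M * z = 0 ∧ x * M * y = 0 ∧ x * M * x = 0) ∧
        (y * M * z = 0 ∧ y * M * y = 0 ∧ y * M * x = 0) ∧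
        (L ^ 2 * y = 0 ∧ L ^ 2 * x = 0) ∧ L * M * x = 0 by
      simpa [Fin.forall_fin_succ] using this
    exact ⟨⟨by linear_combination M * l₀, by linear_combination hMxz,
        by linear_combination M * s₁, by linear_combination M * s₀⟩,
      ⟨by linear_combination hMyz, by linear_combination hMyy, by linear_combination M * s₁⟩,
      ⟨by linear_combination L * l₁ - M * l₀, by linear_combination L * l₀⟩,
      by linear_combination M * l₀⟩

/-- The relations satisfied by the velocity `y` at `x` of a curve of elements `x + t y + ⋯`
along which `N ^ 2 * x`, `N * x ^ 2` and `x ^ 3` vanish, where `N` runs through `L + t M`. -/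
structure IsKernelTangent (L M x y : A) : Prop where
  sq_mul : L ^ 2 * y + 2 * L * M * x = 0
  mul_sq : 2 * L * x * y + M * x ^ 2 = 0
  cube : x ^ 2 * y = 0

lemma five_le_finrank_of_isKernelTangent {x y z : A} (hL : L ∈ V) (hM : M ∈ V) (hx : x ∈ V)
    (hy : y ∈ V) (hz : z ∈ V) (hL4 : L ^ 4 ≠ 0) (hLxx : L * x ^ 2 = 0) (hxxx : x ^ 3 = 0)
    (hLx : L ^ 2 * x = 0) (hMy : IsKernelTangent L M x y) (hyz : IsKernelTangent L y x z)
    (hne : M ^ 2 * x ^ 2 ≠ 0) : 5 ≤ finrank K V := by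
  have : IsAddTorsionFree A := .of_isTorsionFree K A
  have hLMxy : 2 * (L * x * M * y) + M ^ 2 * x ^ 2 = 0 := by linear_combination M * hMy.mul_sq
  have hx₀ : x ≠ 0 := by rintro rfl; simp at hne
  refine card_le_finrank_of_mul_triangular (v := ![M, L, y, z, x])
    (w := ![x ^ 2 * M, L ^ 3, L * x * M, L ^ 2 * M, 1])
    (by simp [Fin.forall_fin_succ, hL, hM, hx, hy, hz]) ?_ ?_
  · suffices x ^ 2 * M * M ≠ 0 ∧ L ^ 3 * L ≠ 0 ∧ L * x * M * y ≠ 0 ∧ L ^ 2 * M * z ≠ 0 ∧ x ≠ 0 by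
      simpa [Fin.forall_fin_succ] using this
    refine ⟨fun h0 => hne ?_, fun h0 => hL4 ?_, fun h0 => hne ?_, fun h0 => hne ?_, hx₀⟩
    · linear_combination h0
    · linear_combination h0
    · linear_combination hLMxy - 2 * h0
    · linear_combination h0 + hLMxy - M * hyz.sq_mul
  · suffices (x ^ 2 * M * L = 0 ∧ x ^ 2 * M * y = 0 ∧ x ^ 2 * M * z = 0 ∧ x ^ 2 * M * x = 0) ∧
        (L ^ 3 * y = 0 ∧ L ^ 3 * z = 0 ∧ L ^ 3 * x = 0) ∧
        (L * x * M * z = 0 ∧ L * x * M * x = 0) ∧ L ^ 2 * M * x = 0 by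
      simpa [Fin.forall_fin_succ] using this
    refine ⟨⟨?_, ?_, ?_, ?_⟩, ⟨?_, ?_, ?_⟩, ⟨?_, ?_⟩, ?_⟩
    · linear_combination M * hLxx
    · linear_combination M * hMy.cube
    · linear_combination M * hyz.cube
    · linear_combination M * hxxx
    · linear_combination L * hMy.sq_mul - 2 * M * hLx
    · linear_combination L * hyz.sq_mul - 2 * y * hLx
    · linear_combination L * hLx
    · refine eq_zero_of_nsmul_eq_zero (n := 2) ?_
      linear_combination M * hyz.mul_sq - M * hMy.cube
    · linear_combination M * hLxx
    · linear_combination M * hLx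

lemma five_le_finrank_of_pencil_sq_mul_eq_zero {p : A[X]} (hL : L ∈ V) (hM : M ∈ V)
    (hp : ∀ n, p.coeff n ∈ V) (h : pencil L M ^ 2 * p = 0) (hsq : p * p = 0)
    (hne : M ^ 2 * (L * p.coeff 0) ≠ 0) : 5 ≤ finrank K V := by
  have : IsAddTorsionFree A := .of_isTorsionFree K A
  have l₀ : L ^ 2 * p.coeff 0 = 0 := by rw [← coeff_zero_pencil_pow_mul L M, h, coeff_zero]
  have l₁ : L ^ 2 * p.coeff 1 + 2 * L * M * p.coeff 0 = 0 := coeff_one_of_pencil_sq_mul_eq_zero h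
  have l₂ : L ^ 2 * p.coeff 2 + 2 * L * M * p.coeff 1 + M ^ 2 * p.coeff 0 = 0 :=
    coeff_of_pencil_sq_mul_eq_zero h 0
  have s₀ : p.coeff 0 * p.coeff 0 = 0 := by rw [← mul_coeff_zero, hsq, coeff_zero]
  have s₁ := coeff_zero_mul_coeff_one_eq_zero hsq
  obtain ⟨hLMxz, hxzu, hLMxu⟩ := products_of_pencil_sq_mul_eq_zero h hsq l₀
  have hx₀ : p.coeff 0 ≠ 0 := by rintro h0; simp [h0] at hne
  obtain ⟨hx, hy, hz⟩ : p.coeff 0 ∈ V ∧ p.coeff 1 ∈ V ∧ p.coeff 2 ∈ V := ⟨hp 0, hp 1, hp 2⟩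
  generalize p.coeff 0 = x, p.coeff 1 = y, p.coeff 2 = z, p.coeff 3 = u at *
  -- By `hLMxu`, the element `M ^ 2` kills `x * z` as soon as `M * u` kills `L * x`.
  obtain ⟨s, hsL, hsz⟩ : ∃ s, s * (L * x) ≠ 0 ∧ s * x * z = 0 := by
    by_cases hu : M * u * (L * x) = 0
    · exact ⟨M ^ 2, hne, by linear_combination hLMxu - 2 * hu⟩
    · exact ⟨M * u, hu, by linear_combination M * hxzu⟩
  refine card_le_finrank_of_mul_triangular (v := ![M, L, z, y, x])
    (w := ![x * L * M, s * x, L ^ 3, L ^ 2 * M, 1])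
    (by simp [Fin.forall_fin_succ, hL, hM, hx, hy, hz]) ?_ ?_
  · suffices x * L * M * M ≠ 0 ∧ s * x * L ≠ 0 ∧ L ^ 3 * z ≠ 0 ∧ L ^ 2 * M * y ≠ 0 ∧ x ≠ 0 by
      simpa [Fin.forall_fin_succ] using this
    refine ⟨fun h0 => hne ?_, fun h0 => hsL ?_, fun h0 => ?_, fun h0 => ?_, hx₀⟩
    · linear_combination h0
    · linear_combination h0
    · refine hne (eq_zero_of_nsmul_eq_zero (n := 3) ?_)
      linear_combination h0 - L * l₂ + 2 * M * l₁
    · refine hne (eq_zero_of_nsmul_eq_zero (n := 2) ?_)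
      linear_combination M * l₁ - h0
  · suffices (x * L * M * L = 0 ∧ x * L * M * z = 0 ∧ x * L * M * y = 0 ∧ x * L * M * x = 0) ∧
        (s * x * z = 0 ∧ s * x * y = 0 ∧ s * x * x = 0) ∧
        (L ^ 3 * y = 0 ∧ L ^ 3 * x = 0) ∧ L ^ 2 * M * x = 0 by
      simpa [Fin.forall_fin_succ] using this
    exact ⟨⟨by linear_combination M * l₀, by linear_combination hLMxz,
        by linear_combination L * M * s₁, by linear_combination L * M * s₀⟩,
      ⟨hsz, by linear_combination s * s₁, by linear_combination s * s₀⟩,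
      ⟨by linear_combination L * l₁ - 2 * M * l₀, by linear_combination L * l₀⟩,
      by linear_combination M * l₀⟩

end FiveVectors

section KernelVanishing

open Polynomial

variable {K A : Type*} [Field K] [CharZero K] [CommRing A] [Algebra K A]
  {𝒜 : ℕ → Submodule K A} [GradedAlgebra 𝒜] [Module.Finite K (𝒜 1)] {L M x : A}

lemma IsGeneral.mulKer_eq_bot_of_detectedByPowers_three (hdet : DetectedByPowers 𝒜 3)
    (hcodim : finrank K (𝒜 1) ≤ 4) (hL : IsGeneral (𝒜 1) 1 L) : mulKer (𝒜 1) (L ^ 1) = ⊥ := by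
  refine (Submodule.eq_bot_iff _).2 fun x hx => hdet 2 1 rfl x (mem_mulKer.1 hx).1 fun M hM => ?_
  by_contra hne
  obtain ⟨p, hp, rfl⟩ := hL.exists_kernelCurve hM hx
  have h5 : 5 ≤ finrank K (𝒜 1) :=
    five_le_finrank_of_pencil_mul_eq_zero hL.mem hM hp.coeff_mem
      (by simpa using hp.pencil_pow_mul_eq_zero)
      (by simpa using hp.pencil_pow_mul_sq_eq_zero (n := 0) hdet) hne
  omega

lemma IsGeneral.exists_isKernelTangent (hdet : DetectedByPowers 𝒜 4) (hL : IsGeneral (𝒜 1) 2 L)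
    (hM : M ∈ 𝒜 1) (hx : x ∈ mulKer (𝒜 1) (L ^ 2)) : ∃ y ∈ 𝒜 1, IsKernelTangent L M x y := by
  have : IsAddTorsionFree A := .of_isTorsionFree K A
  obtain ⟨p, hp, rfl⟩ := hL.exists_kernelCurve hM hx
  have h₂ := coeff_one_pencil_pow_mul L M 0 (p * p)
  rw [hp.pencil_pow_mul_sq_eq_zero hdet, coeff_zero, coeff_one_mul_self, mul_coeff_zero,
    nsmul_eq_mul] at h₂
  have hcube : p * p * p = 0 :=
    hp.eq_zero_of_general fun t hN hpt => by simpa using hN.pow_mul_cube_eq_zero (n := 0) hdet hpt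
  have h₃ : p.coeff 0 ^ 2 * p.coeff 1 = 0 := by
    refine eq_zero_of_nsmul_eq_zero (n := 3) ?_
    have h₃ := mul_coeff_one (p * p) p
    rw [hcube, coeff_zero, coeff_one_mul_self, mul_coeff_zero] at h₃
    linear_combination -h₃
  exact ⟨p.coeff 1, hp.coeff_mem 1, coeff_one_of_pencil_sq_mul_eq_zero hp.pencil_pow_mul_eq_zero,
    by linear_combination -h₂, h₃⟩

lemma IsGeneral.sq_eq_zero_of_mem_mulKer (hdet : DetectedByPowers 𝒜 4)
    (hcodim : finrank K (𝒜 1) ≤ 4) (hL : IsGeneral (𝒜 1) 2 L) (hx : x ∈ mulKer (𝒜 1) (L ^ 2)) :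
    x ^ 2 = 0 := by
  obtain ⟨hx₁, hLx⟩ := mem_mulKer.1 hx
  refine hdet 2 2 rfl _ (pow_mem_degree 𝒜 hx₁ 2) fun M hM => ?_
  by_contra hne
  obtain ⟨y, hy, hMy⟩ := hL.exists_isKernelTangent hdet hM hx
  obtain ⟨z, hz, hyz⟩ := hL.exists_isKernelTangent hdet hy hx
  have hLxx := hL.pow_mul_mul_eq_zero (n := 1) hdet hx hx
  have hxxx := hL.pow_mul_cube_eq_zero (n := 0) hdet hx
  have h5 : 5 ≤ finrank K (𝒜 1) :=
    five_le_finrank_of_isKernelTangent hL.mem hM hx₁ hy hz hL.pow_ne_zero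
      (by linear_combination hLxx) (by linear_combination hxxx) hLx hMy hyz hne
  omega

lemma IsGeneral.mul_eq_zero_of_mem_mulKer (hdet : DetectedByPowers 𝒜 4)
    (hcodim : finrank K (𝒜 1) ≤ 4) (hL : IsGeneral (𝒜 1) 2 L) (hx : x ∈ mulKer (𝒜 1) (L ^ 2)) :
    L * x = 0 := by
  refine hdet 2 2 rfl _ (SetLike.mul_mem_graded hL.mem (mem_mulKer.1 hx).1) fun M hM => ?_
  by_contra hne
  obtain ⟨p, hp, rfl⟩ := hL.exists_kernelCurve hM hx
  have hsq : p * p = 0 := hp.eq_zero_of_general fun t hN hpt => by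
    simpa [pow_two] using hN.sq_eq_zero_of_mem_mulKer hdet hcodim hpt
  have h5 : 5 ≤ finrank K (𝒜 1) :=
    five_le_finrank_of_pencil_sq_mul_eq_zero hL.mem hM hp.coeff_mem hp.pencil_pow_mul_eq_zero
      hsq hne
  omega

lemma IsGeneral.mulKer_eq_bot_of_detectedByPowers_four (hdet : DetectedByPowers 𝒜 4)
    (hcodim : finrank K (𝒜 1) ≤ 4) (hL : IsGeneral (𝒜 1) 2 L) : mulKer (𝒜 1) (L ^ 2) = ⊥ := by
  have hann {N u : A} (hN : IsGeneral (𝒜 1) 2 N) (hu : u ∈ mulKer (𝒜 1) (N ^ 2)) : N * u = 0 :=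
    hN.mul_eq_zero_of_mem_mulKer hdet hcodim hu
  have hMx {M x : A} (hM : M ∈ 𝒜 1) (hx : x ∈ mulKer (𝒜 1) (L ^ 2)) : M * x = 0 := by
    obtain ⟨p, hp, rfl⟩ := hL.exists_kernelCurve hM hx
    have hlin : pencil L M * p = 0 := hp.eq_zero_of_general fun t hN hpt => by
      simpa using hann hN hpt
    have l₁ : L * p.coeff 1 + M * p.coeff 0 = 0 := coeff_of_pencil_mul_eq_zero hlin 0
    have hy : p.coeff 1 ∈ mulKer (𝒜 1) (L ^ 2) :=
      mem_mulKer.2 ⟨hp.coeff_mem 1, by linear_combination L * l₁ - M * hann hL hx⟩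
    linear_combination l₁ - hann hL hy
  refine (Submodule.eq_bot_iff _).2 fun x hx => hdet 3 1 rfl x (mem_mulKer.1 hx).1 fun M hM => ?_
  rw [pow_succ, mul_assoc, hMx hM hx, mul_zero]

end KernelVanishing

section StrongLefschetz

variable {K A : Type*} [Field K] [CommRing A] [Algebra K A]

/-- `L` is a strong Lefschetz element of `A_0 ⊕ ⋯ ⊕ A_d`: every multiplication map
`×L^k : A_i → A_{i+k}` with `i + k ≤ d` has maximal rank. -/
def IsStrongLefschetz (𝒜 : ℕ → Submodule K A) (d : ℕ) (L : A) : Prop :=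
  ∀ i k, i + k ≤ d →
    (∀ v ∈ 𝒜 i, L ^ k * v = 0 → v = 0) ∨ ∀ w ∈ 𝒜 (i + k), ∃ v ∈ 𝒜 i, L ^ k * v = w

lemma exists_mul_eq_of_mulKer_eq_bot {V W : Submodule K A} [Module.Finite K V] [Module.Finite K W]
    {a : A} (hmul : ∀ v ∈ V, a * v ∈ W) (hfinrank : finrank K W ≤ finrank K V)
    (hker : mulKer V a = ⊥) : ∀ w ∈ W, ∃ v ∈ V, a * v = w := by
  have hrank := finrank_map_mulLeft_add_finrank_mulKer V a
  rw [hker, finrank_bot, add_zero] at hrank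
  have hmap : V.map (LinearMap.mulLeft K a) = W :=
    Submodule.eq_of_le_of_finrank_le (Submodule.map_le_iff_le_comap.2 hmul)
      (hfinrank.trans hrank.ge)
  intro w hw
  rwa [← hmap, Submodule.mem_map] at hw

lemma mulKer_one_right (V : Submodule K A) : mulKer V 1 = ⊥ :=
  (Submodule.eq_bot_iff _).2 fun x hx => by simpa using (mem_mulKer.1 hx).2

lemma mulKer_one_left {a : A} (ha : a ≠ 0) : mulKer (1 : Submodule K A) a = ⊥ := by
  refine (Submodule.eq_bot_iff _).2 fun x hx => ?_
  obtain ⟨⟨c, rfl⟩, hac⟩ := mem_mulKer.1 hx |>.imp_left Submodule.mem_one.1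
  rw [mul_comm, ← Algebra.smul_def] at hac
  rw [(smul_eq_zero.1 hac).resolve_right ha, map_zero]

variable {𝒜 : ℕ → Submodule K A} [GradedAlgebra 𝒜] {d : ℕ} {L : A}

lemma finrank_le_finrank_of_nondegenerate {i j : ℕ} [Module.Finite K (𝒜 j)]
    (hline : finrank K (𝒜 (i + j)) = 1) (hnd : ∀ a ∈ 𝒜 i, a ≠ 0 → ∃ b ∈ 𝒜 j, a * b ≠ 0) :
    finrank K (𝒜 i) ≤ finrank K (𝒜 j) := by
  have : Module.Finite K (𝒜 (i + j)) := finite_of_finrank_eq_succ hline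
  let Φ : 𝒜 i →ₗ[K] 𝒜 j →ₗ[K] 𝒜 (i + j) := DirectSum.gMulLHom K (A := fun n => 𝒜 n)
  have hΦ : Function.Injective Φ := by
    refine (injective_iff_map_eq_zero Φ).2 fun a ha => by_contra fun hne => ?_
    obtain ⟨b, hb, hab⟩ := hnd a a.2 (by simpa using hne)
    exact hab (congrArg Subtype.val (LinearMap.congr_fun ha ⟨b, hb⟩))
  simpa [finrank_linearMap, hline] using LinearMap.finrank_le_finrank_of_injective hΦ

theorem isStrongLefschetz_of_mulKer_eq_bot [∀ i, Module.Finite K (𝒜 i)] (hL : L ∈ 𝒜 1)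
    (hsymm : ∀ i j, i + j = d → finrank K (𝒜 j) ≤ finrank K (𝒜 i))
    (hker : ∀ i k, i + (i + k) = d → mulKer (𝒜 i) (L ^ k) = ⊥) : IsStrongLefschetz 𝒜 d L := by
  intro i k hik
  rcases le_total (i + (i + k)) d with h | h
  · obtain ⟨l, rfl⟩ := Nat.exists_eq_add_of_le h
    refine .inl fun v hv hkv => ?_
    have hv' : v ∈ mulKer (𝒜 i) (L ^ (k + l)) :=
      mem_mulKer.2 ⟨hv, by rw [add_comm, pow_add, mul_assoc, hkv, mul_zero]⟩
    rwa [hker i (k + l) (by ring), Submodule.mem_bot] at hv'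
  · obtain ⟨j, rfl⟩ := Nat.exists_eq_add_of_le hik
    obtain ⟨l, rfl⟩ : ∃ l, i = j + l := Nat.exists_eq_add_of_le (by omega)
    have hmul : ∀ v ∈ 𝒜 j, L ^ (l + k) * v ∈ 𝒜 (j + l + k) := fun v hv => by
      have hmem := SetLike.mul_mem_graded (pow_mem_degree 𝒜 hL (l + k)) hv
      rwa [add_comm, ← add_assoc] at hmem
    refine .inr fun w hw => ?_
    obtain ⟨v, hv, rfl⟩ := exists_mul_eq_of_mulKer_eq_bot hmul (hsymm j (j + l + k) (by ring))
      (hker j (l + k) (by ring)) w hw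
    refine ⟨L ^ l * v, ?_, by ring⟩
    rw [add_comm j]
    exact SetLike.mul_mem_graded (pow_mem_degree 𝒜 hL l) hv

end StrongLefschetz

section StandardGraded

variable {K A : Type*} [Field K] [CommRing A] [Algebra K A] 
lemma nontrivial_of_finrank_submodule_eq_one {V : Submodule K A} (h : finrank K V = 1) :
    Nontrivial A := by
  have : Nontrivial V := nontrivial_of_finrank_eq_succ h
  exact V.injective_subtype.nontrivial

variable {𝒜 : ℕ → Submodule K A} [GradedAlgebra 𝒜] {d : ℕ}

lemma degree_zero_eq_one (h0 : finrank K (𝒜 0) = 1) : 𝒜 0 = 1 := by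
  have : Module.Finite K (𝒜 0) := finite_of_finrank_eq_succ h0
  have : Nontrivial A := nontrivial_of_finrank_submodule_eq_one h0
  refine (Submodule.eq_of_le_of_finrank_le ?_ ?_).symm
  · exact Submodule.one_le.2 SetLike.GradedOne.one_mem
  · rw [h0, Submodule.one_eq_span, finrank_span_singleton one_ne_zero]

lemma degree_eq_pow (hstd : ∀ i, 𝒜 (i + 1) = 𝒜 1 * 𝒜 i) (h0 : finrank K (𝒜 0) = 1) (k : ℕ) :
    𝒜 k = 𝒜 1 ^ k := by
  induction k with
  | zero => rw [pow_zero, degree_zero_eq_one h0]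
  | succ k ih => rw [hstd, ih, pow_succ']

lemma finite_degree [Module.Finite K (𝒜 1)] (hstd : ∀ i, 𝒜 (i + 1) = 𝒜 1 * 𝒜 i)
    (h0 : finrank K (𝒜 0) = 1) (k : ℕ) : Module.Finite K (𝒜 k) := by
  rw [degree_eq_pow hstd h0 k]
  exact Module.Finite.iff_fg.2 ((Module.Finite.iff_fg.1 ‹_›).pow k)

variable [CharZero K]

lemma exists_pow_ne_zero_and_mulKer_eq_bot [Nontrivial A] [Module.Finite K (𝒜 1)] (hd : d ≤ 4)
    (hdet : DetectedByPowers 𝒜 d) (hcodim : finrank K (𝒜 1) ≤ 4) :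
    ∃ L ∈ 𝒜 1, L ^ d ≠ 0 ∧ ∀ k, k + 2 = d → mulKer (𝒜 1) (L ^ k) = ⊥ := by
  have hpow : ∃ L ∈ 𝒜 1, L ^ d ≠ 0 := by
    by_contra! h
    exact one_ne_zero <| hdet d 0 rfl 1 SetLike.GradedOne.one_mem fun N hN => by
      rw [h N hN, zero_mul]
  rcases lt_or_ge d 3 with hd3 | hd3
  · obtain ⟨L, hL, hLd⟩ := hpow
    refine ⟨L, hL, hLd, fun k hk => ?_⟩
    rw [show k = 0 by omega, pow_zero, mulKer_one_right]
  · obtain ⟨m, rfl⟩ := Nat.exists_eq_add_of_le' (Nat.le_of_succ_le hd3)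
    obtain ⟨L, hL⟩ := exists_isGeneral hpow
    refine ⟨L, hL.mem, hL.pow_ne_zero, fun k hk => ?_⟩
    obtain rfl : k = m := by omega
    obtain rfl | rfl : k = 1 ∨ k = 2 := by omega
    · exact hL.mulKer_eq_bot_of_detectedByPowers_three hdet hcodim
    · exact hL.mulKer_eq_bot_of_detectedByPowers_four hdet hcodim

end StandardGraded

theorem standard_AG_algebra_low_socle_degree_SLP_general
    {K A : Type*} [Field K] [CharZero K] [CommRing A] [Algebra K A] {d : ℕ} (hd : d ≤ 4)
    (𝒜 : ℕ → Submodule K A) [GradedAlgebra 𝒜] [Module.Finite K (𝒜 1)]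
    (hstd : ∀ i, 𝒜 (i + 1) = 𝒜 1 * 𝒜 i)
    (h0 : finrank K (𝒜 0) = 1)
    (hcodim : finrank K (𝒜 1) ≤ 4)
    (hsocle : finrank K (𝒜 d) = 1)
    (hgor : ∀ k ≤ d, ∀ a ∈ 𝒜 k, a ≠ 0 → ∃ b ∈ 𝒜 (d - k), a * b ≠ 0) :
    ∃ L ∈ 𝒜 1, IsStrongLefschetz 𝒜 d L := by
  have : Nontrivial A := nontrivial_of_finrank_submodule_eq_one h0
  have : ∀ k, Module.Finite K (𝒜 k) := finite_degree hstd h0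
  have hdet : DetectedByPowers 𝒜 d := detectedByPowers_of_nondegenerate (degree_eq_pow hstd h0) hgor
  obtain ⟨L, hL, hLd, hker⟩ := exists_pow_ne_zero_and_mulKer_eq_bot hd hdet hcodim
  refine ⟨L, hL, isStrongLefschetz_of_mulKer_eq_bot hL (fun i j hij => ?_) fun i k hik => ?_⟩
  · rw [← hij, add_comm] at hsocle
    refine finrank_le_finrank_of_nondegenerate hsocle fun a ha hne => ?_
    simpa [← hij] using hgor j (by omega) a ha hne
  · match i with
    | 0 =>
      rw [zero_add, zero_add] at hik
      rw [degree_zero_eq_one h0, hik, mulKer_one_left hLd]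
    | 1 => exact hker k (by omega)
    | i + 2 => rw [show k = 0 by omega, pow_zero, mulKer_one_right]

/-- **Corollary.** Every standard graded Artinian Gorenstein `ℂ`-algebra
`A = ⊕_{i=0}^d A_i` of codimension `dim_ℂ A_1 ≤ 4` and socle degree `d ∈ {3,4}` has the
Strong Lefschetz Property: there is `L ∈ A_1` such that every multiplication map
`×L^k : A_i → A_{i+k}` with `i + k ≤ d` is injective or surjective. -/
theorem standard_AG_algebra_low_socle_degree_SLP
    (d : ℕ) (hd : d = 3 ∨ d = 4)
    (A : Type*) [CommRing A] [Algebra ℂ A] [FiniteDimensional ℂ A]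
    (𝒜 : ℕ → Submodule ℂ A) [GradedAlgebra 𝒜]
    (hstd : ∀ i : ℕ, 𝒜 (i + 1) = 𝒜 1 * 𝒜 i)
    (htop : ∀ j : ℕ, d < j → 𝒜 j = ⊥)
    (h0 : Module.finrank ℂ (𝒜 0) = 1)
    (hcodim : Module.finrank ℂ (𝒜 1) ≤ 4)
    (hsocle : Module.finrank ℂ (𝒜 d) = 1)
    (hgor : ∀ k : ℕ, k ≤ d → ∀ a ∈ 𝒜 k, a ≠ 0 → ∃ b ∈ 𝒜 (d - k), a * b ≠ 0) :
    ∃ L ∈ 𝒜 1, ∀ i k : ℕ, i + k ≤ d →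
      (∀ v ∈ 𝒜 i, L ^ k * v = 0 → v = 0) ∨
      (∀ w ∈ 𝒜 (i + k), ∃ v ∈ 𝒜 i, L ^ k * v = w) :=
  standard_AG_algebra_low_socle_degree_SLP_general (by omega) 𝒜 hstd h0 hcodim hsocle hgor
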